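/- For every n : ℕ and every target function f : (Fin n → Bool) → Bool, the learning algorithm terminates after at most n + 1 updates: E^(n+1) = ∅, i.e. for all x ∈ (Fin n → Bool), h_{g^(n+1)}(x) = f(x). -/

import Mathlib

instance : Std.Commutative (α := Bool) xor := ⟨Bool.xor_comm⟩
instance : Std.Associative (α := Bool) xor := ⟨Bool.xor_assoc⟩

/-- XOR of the Boolean values `f a` over a finite set `s`. -/
def xorSum {α : Type*} (s : Finset α) (f : α → Bool) : Bool :=
  s.fold xor false f

/-- The Boolean monomial: `m_u(x) = true` iff `x i = true` for every `i` with `u i = true`. -/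
def mGate (n : ℕ) (u x : Fin n → Bool) : Bool :=
  decide (∀ i, u i = true → x i = true)

/-- The Hamming weight `w_H(u) = |1_u|` of a bit string. -/
def hammingWeight (n : ℕ) (u : Fin n → Bool) : ℕ :=
  (Finset.univ.filter fun i => u i = true).card

/-- The output `h_g(x)` of the network with coefficient function `g`:
the XOR over all `u` of `g u AND m_u(x)`. -/
def netOut (n : ℕ) (g : (Fin n → Bool) → Bool) (x : Fin n → Bool) : Bool :=
  xorSum Finset.univ fun u : Fin n → Bool => g u && mGate n u x

/-- The sequence of coefficient functions produced by the learning algorithm for the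
target function `f`: `g⁽⁰⁾` is constant false, and `g⁽ᵏ⁺¹⁾` flips `g⁽ᵏ⁾` exactly on the
erroneous inputs `E⁽ᵏ⁾ = {x | h_{g⁽ᵏ⁾}(x) ≠ f(x)}`. -/
def gSeq (n : ℕ) (f : (Fin n → Bool) → Bool) : ℕ → ((Fin n → Bool) → Bool)
  | 0 => fun _ => false
  | k + 1 => fun u =>
      if netOut n (gSeq n f k) u ≠ f u then !(gSeq n f k u) else gSeq n f k u

/-!
The gate `m_u` is the indicator of `{x | u ≤ x}` in the pointwise order on bit strings, so the
network output is a zeta transform over `𝔽₂`: `h_g(x)` is the XOR of `g u` over all `u ≤ x`.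
One update adds the error function `e = h_g + f` to `g`, hence adds the zeta transform of `e` to
`h_g`. The term `u = x` of that transform is `e x` itself and repairs the output at `x`; what is
left as the new error at `x` is the XOR of `e u` over `u < x`. So the new output at `x` is correct
as soon as the old one was correct strictly below `x`, and correctness climbs the order by at least
one level per update.
-/

section XorSum

variable {α : Type*}

theorem xorSum_eq_false {s : Finset α} {f : α → Bool} (h : ∀ a ∈ s, f a = false) :
    xorSum s f = false := by
  classical
  calc
    xorSum s f = s.fold xor false fun _ => false := Finset.fold_congr h
    _ = false := by rw [Finset.fold_const false rfl, Bool.xor_self, ite_self]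

theorem xorSum_xor (s : Finset α) (f g : α → Bool) :
    xorSum s (fun a => xor (f a) (g a)) = xor (xorSum s f) (xorSum s g) :=
  Finset.fold_op_distrib (op := xor) (b₁ := false) (b₂ := false)

theorem xorSum_cons {s : Finset α} {a : α} (h : a ∉ s) (f : α → Bool) :
    xorSum (s.cons a h) f = xor (f a) (xorSum s f) :=
  Finset.fold_cons h

theorem xorSum_filter (s : Finset α) (p : α → Prop) [DecidablePred p] (f : α → Bool) :
    xorSum (s.filter p) f = xorSum s fun a => f a && decide (p a) := by
  have outside : xorSum (s.filter fun a => ¬p a) (fun _ => false) = false :=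
    xorSum_eq_false fun _ _ => rfl
  calc
    xorSum (s.filter p) f
        = xor (xorSum (s.filter p) f) (xorSum (s.filter fun a => ¬p a) fun _ => false) := by
      rw [outside, Bool.xor_false]
    _ = xorSum s fun a => if p a then f a else false := (Finset.fold_ite' rfl p).symm
    _ = xorSum s fun a => f a && decide (p a) := by
      congr 1 with a
      by_cases h : p a <;> simp [h]

end XorSum

section LearningStep

variable {α : Type*} [PartialOrder α] [LocallyFiniteOrderBot α]

/-- The zeta transform of `g` over `𝔽₂`, with `Bool` standing for `𝔽₂` and XOR for its addition;
the network output for coefficients indexed by an arbitrary order in place of bit strings. -/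
def xorZeta (g : α → Bool) (x : α) : Bool :=
  xorSum (Finset.Iic x) g

/-- One update of the learning algorithm with target `f`: the coefficient of `u` is flipped exactly
when the error bit `xor (xorZeta g u) (f u)` is set. -/
def learningStep (f g : α → Bool) (u : α) : Bool :=
  xor (g u) (xor (xorZeta g u) (f u))

theorem xorZeta_learningStep (f g : α → Bool) (x : α) :
    xorZeta (learningStep f g) x =
      xor (f x) (xorSum (Finset.Iio x) fun u => xor (xorZeta g u) (f u)) := by
  let error : α → Bool := fun u => xor (xorZeta g u) (f u)
  calc
    xorZeta (learningStep f g) x = xor (xorZeta g x) (xorSum (Finset.Iic x) error) :=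
      xorSum_xor _ g error
    _ = xor (xorZeta g x) (xor (error x) (xorSum (Finset.Iio x) error)) := by
      rw [Finset.Iic_eq_cons_Iio, xorSum_cons]
    _ = xor (f x) (xorSum (Finset.Iio x) error) := by
      simp only [error, ← Bool.xor_assoc, Bool.xor_self, Bool.false_xor]

theorem xorZeta_learningStep_of_forall_lt {f g : α → Bool} {x : α}
    (h : ∀ u < x, xorZeta g u = f u) : xorZeta (learningStep f g) x = f x := by
  have no_error_below : xorSum (Finset.Iio x) (fun u => xor (xorZeta g u) (f u)) = false :=
    xorSum_eq_false fun u hu => by rw [h u (Finset.mem_Iio.mp hu), Bool.xor_self]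
  rw [xorZeta_learningStep, no_error_below, Bool.xor_false]

theorem learning_terminates_general {w : α → ℕ} (hw : StrictMono w) (f g : α → Bool) {k : ℕ}
    {x : α} (hx : w x < k) : xorZeta ((learningStep f)^[k] g) x = f x := by
  induction k generalizing x with
  | zero => exact absurd hx (Nat.not_lt_zero _)
  | succ k ih =>
    rw [Function.iterate_succ_apply']
    exact xorZeta_learningStep_of_forall_lt fun u hu =>
      ih ((hw hu).trans_le (Nat.le_of_lt_succ hx))

end LearningStep

section BooleanCube

variable {n : ℕ}

theorem mGate_eq_true_iff {u x : Fin n → Bool} : mGate n u x = true ↔ u ≤ x :=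
  decide_eq_true_iff

instance instLocallyFiniteOrderBotBoolCube : LocallyFiniteOrderBot (Fin n → Bool) :=
  .ofIic _ (fun x => {u | mGate n u x}) fun _ _ => by
    rw [Finset.mem_filter_univ, mGate_eq_true_iff]

theorem hammingWeight_strictMono : StrictMono (hammingWeight n) := by
  intro u x hux
  obtain ⟨hle, i, hi⟩ := Pi.lt_def.mp hux
  obtain ⟨hui, hxi⟩ := Bool.lt_iff.mp hi
  refine Finset.card_lt_card <| (Finset.ssubset_iff_of_subset ?_).mpr ⟨i, ?_, ?_⟩
  · exact Finset.monotone_filter_right _ fun j _ => hle j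
  · simpa only [Finset.mem_filter_univ] using hxi
  · simp only [Finset.mem_filter_univ, hui, Bool.false_eq_true, not_false_eq_true]

theorem hammingWeight_le (x : Fin n → Bool) : hammingWeight n x ≤ n :=
  card_finset_fin_le _

theorem netOut_eq_xorZeta (g : (Fin n → Bool) → Bool) : netOut n g = xorZeta g := by
  funext x
  have active_gates : (Finset.univ.filter fun u => mGate n u x = true) = Finset.Iic x := by
    ext u
    rw [Finset.mem_filter_univ, mGate_eq_true_iff, Finset.mem_Iic]
  calc
    netOut n g x = xorSum Finset.univ fun u => g u && decide (mGate n u x = true) := by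
      simp only [netOut, Bool.decide_eq_true]
    _ = xorSum (Finset.univ.filter fun u => mGate n u x = true) g := (xorSum_filter ..).symm
    _ = xorZeta g x := by rw [active_gates, xorZeta]

theorem gSeq_succ (f : (Fin n → Bool) → Bool) (k : ℕ) :
    gSeq n f (k + 1) = learningStep f (gSeq n f k) := by
  funext u
  simp only [gSeq, netOut_eq_xorZeta, learningStep]
  by_cases correct : xorZeta (gSeq n f k) u = f u
  · rw [if_neg (not_ne_iff.mpr correct), correct, Bool.xor_self, Bool.xor_false]
  · have error_bit : xor (xorZeta (gSeq n f k) u) (f u) = true := bne_iff_ne.mpr correct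
    rw [if_pos correct, error_bit, Bool.xor_true]

theorem gSeq_eq_iterate (f : (Fin n → Bool) → Bool) (k : ℕ) :
    gSeq n f k = (learningStep f)^[k] fun _ => false := by
  induction k with
  | zero => rfl
  | succ k ih => rw [gSeq_succ, ih, Function.iterate_succ_apply']

end BooleanCube

/-- the learning algorithm terminates after at most `n + 1` updates:
`E⁽ⁿ⁺¹⁾ = ∅`, i.e. the network after `n + 1` updates computes `f` on every input. -/
theorem learning_terminates (n : ℕ) (f : (Fin n → Bool) → Bool) :
    ∀ x : Fin n → Bool, netOut n (gSeq n f (n + 1)) x = f x := by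
  intro x
  rw [netOut_eq_xorZeta, gSeq_eq_iterate]
  exact learning_terminates_general hammingWeight_strictMono f _
    (Nat.lt_succ_of_le (hammingWeight_le x))
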